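/- For every n ≥ 1, r_3(ℤ_6^n) = 2^n · r_3(ℤ_3^n). -/

import Mathlib

/-- `A` contains a `k`-term arithmetic progression `a, a+d, …, a+(k-1)d`
whose terms are pairwise distinct. -/
def IsDistinctAP {G : Type*} [AddCommGroup G] (k : ℕ) (A : Set G) : Prop :=
  ∃ a d : G, (∀ i : Fin k, a + (i : ℕ) • d ∈ A) ∧
    Function.Injective fun i : Fin k => a + (i : ℕ) • d

/-- `rAP k m n` is the largest cardinality of a subset of `(ℤ/mℤ)^n` containing
no `k`-term arithmetic progression of pairwise distinct elements. -/
noncomputable def rAP (k m n : ℕ) : ℕ :=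
  sSup {s : ℕ | ∃ A : Finset (Fin n → ZMod m),
    ¬ IsDistinctAP k (A : Set (Fin n → ZMod m)) ∧ A.card = s}

theorem isDistinctAP_three {G : Type*} [AddCommGroup G] (A : Set G) :
    IsDistinctAP 3 A ↔ ∃ a d : G, a ∈ A ∧ a + d ∈ A ∧ a + (2:ℕ) • d ∈ A ∧ (2:ℕ) • d ≠ 0 := by
  constructor
  · rintro ⟨a, d, h, hi⟩
    refine ⟨a, d, by simpa using h 0, by simpa using h 1, by simpa using h 2, fun h0 => ?_⟩
    have := @hi 0 2 (by simp [h0])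
    exact absurd this (by decide)
  · rintro ⟨a, d, h0, h1, h2, hd⟩
    have hd1 : d ≠ 0 := by rintro rfl; simp at hd
    refine ⟨a, d, ?_, ?_⟩
    · intro i; fin_cases i <;> simpa
    · intro i j hij
      have hij' : (i : ℕ) • d = (j : ℕ) • d := by simpa using hij
      fin_cases i <;> fin_cases j <;> simp_all [two_nsmul]

theorem rAP_bdd (k m n : ℕ) [NeZero m] : BddAbove {s : ℕ | ∃ A : Finset (Fin n → ZMod m),
    ¬ IsDistinctAP k (A : Set (Fin n → ZMod m)) ∧ A.card = s} := by
  refine ⟨Fintype.card (Fin n → ZMod m), ?_⟩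
  rintro s ⟨A, -, rfl⟩
  exact Finset.card_le_univ A

theorem card_le_rAP {k m n : ℕ} [NeZero m] (A : Finset (Fin n → ZMod m))
    (h : ¬ IsDistinctAP k (A : Set (Fin n → ZMod m))) : A.card ≤ rAP k m n :=
  le_csSup (rAP_bdd k m n) ⟨A, h, rfl⟩

theorem exists_rAP (m n : ℕ) [NeZero m] : ∃ A : Finset (Fin n → ZMod m),
    ¬ IsDistinctAP 3 (A : Set (Fin n → ZMod m)) ∧ A.card = rAP 3 m n := by
  refine Nat.sSup_mem (s := {s : ℕ | ∃ A : Finset (Fin n → ZMod m),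
    ¬ IsDistinctAP 3 (A : Set (Fin n → ZMod m)) ∧ A.card = s}) ?_ (rAP_bdd 3 m n)
  refine ⟨0, ∅, ?_, rfl⟩
  rw [isDistinctAP_three]
  simp

theorem exists_equiv (n : ℕ) :
    Nonempty ((Fin n → ZMod 6) ≃+ (Fin n → ZMod 2) × (Fin n → ZMod 3)) := by
  let c : ZMod 6 ≃+* ZMod 2 × ZMod 3 := ZMod.chineseRemainder (m := 2) (n := 3) (by decide)
  exact ⟨{ toFun := fun f => (fun i => (c (f i)).1, fun i => (c (f i)).2)
           invFun := fun p i => c.symm (p.1 i, p.2 i)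
           left_inv := fun f => by ext i; simp
           right_inv := fun p => by ext i <;> simp
           map_add' := fun f g => by ext i <;> simp }⟩

theorem r3_Z6_eq (n : ℕ) (hn : 1 ≤ n) : rAP 3 6 n = 2 ^ n * rAP 3 3 n := by
  classical
  obtain ⟨e⟩ := exists_equiv n
  have two0 : ∀ x : Fin n → ZMod 2, (2:ℕ) • x = 0 := by
    intro x; ext i; simp only [Pi.smul_apply, Pi.zero_apply]
    generalize x i = y
    revert y; decide
  apply le_antisymm
  · obtain ⟨A, hA, hc⟩ := exists_rAP 6 n
    rw [← hc]
    have key := Finset.card_le_mul_card_image_of_maps_to (f := fun x => (e x).1) (s := A)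
      (t := Finset.univ) (fun _ _ => Finset.mem_univ _) (rAP 3 3 n) ?_
    · simpa [mul_comm] using key
    · intro b _
      have hinj : Set.InjOn (fun x => (e x).2) (A.filter fun x => (e x).1 = b) := by
        intro x hx y hy hxy
        simp only [Finset.coe_filter, Set.mem_ofPred_eq] at hx hy
        exact e.injective (Prod.ext (hx.2.trans hy.2.symm) hxy)
      rw [← Finset.card_image_of_injOn hinj]
      apply card_le_rAP
      rw [isDistinctAP_three] at hA ⊢
      rintro ⟨a, d, h0, h1, h2, hd⟩
      apply hA
      have mem : ∀ z, z ∈ ((A.filter fun x => (e x).1 = b).image (fun x => (e x).2) : Finset _) →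
          e.symm (b, z) ∈ A := by
        intro z hz
        simp only [Finset.mem_image, Finset.mem_filter] at hz
        obtain ⟨x, ⟨hx, hb⟩, rfl⟩ := hz
        rw [← hb]; simpa using hx
      refine ⟨e.symm (b, a), e.symm (0, d), mem _ h0, ?_, ?_, ?_⟩
      · rw [← map_add]; simpa using mem _ h1
      · rw [← map_nsmul, ← map_add]; simpa using mem _ h2
      · rw [← map_nsmul]
        intro h
        rw [map_eq_zero_iff e.symm e.symm.injective] at h
        exact hd (congrArg Prod.snd h)
  · obtain ⟨B, hB, hc⟩ := exists_rAP 3 n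
    rw [← hc]
    have : (((Finset.univ : Finset (Fin n → ZMod 2)) ×ˢ B).map e.symm.toEquiv.toEmbedding).card
        = 2 ^ n * B.card := by
      simp [Finset.card_product]
    rw [← this]
    apply card_le_rAP
    rw [isDistinctAP_three] at hB ⊢
    rintro ⟨a, d, h0, h1, h2, hd⟩
    apply hB
    have mem : ∀ z, z ∈ (((Finset.univ : Finset (Fin n → ZMod 2)) ×ˢ B).map
        e.symm.toEquiv.toEmbedding) → (e z).2 ∈ B := by
      intro z hz
      obtain ⟨p, hp, rfl⟩ := Finset.mem_map.1 hz
      have : e (e.symm p) = p := e.apply_symm_apply p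
      change (e (e.symm p)).2 ∈ B
      rw [this]
      exact (Finset.mem_product.1 hp).2
    refine ⟨(e a).2, (e d).2, mem _ h0, ?_, ?_, ?_⟩
    · simpa using mem _ h1
    · have := mem _ h2
      rwa [map_add, map_nsmul] at this
    · intro h
      apply hd
      apply e.injective
      rw [map_nsmul, map_zero]
      exact Prod.ext (two0 _) h
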